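/- The discriminant of the polynomial A(x) = x^8 - 8w x^6 + 6(2az+3b) x^4 - (4a^3+27b^2) in Q[a,b,z,w][x] equals -2^{32}(4a^3 + 27b^2)^3 · (81z^4a^4 - 108z^3w^2a^3 + 486z^3a^3b - 486z^2w^2a^2b + 18z^2a^5 + 1215z^2a^2b^2 - 108zw^2a^4 - 1458zw^2ab^2 + 54za^4b + 1458zab^3 + 108w^4a^3 + 729w^4b^2 - 162w^2a^3b - 1458w^2b^3 + a^6 + 54a^3b^2 + 729b^4)^2, where the discriminant is computed as (-1)^{28}·Res_x(A, A')/1. -/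

import Mathlib

/-- The Sylvester matrix of `f` (regarded as having degree `m`) and `g`
(regarded as having degree `n`). -/
noncomputable def sylvesterMatrix {R : Type*} [CommRing R] (f g : Polynomial R) (m n : ℕ) :
    Matrix (Fin (n + m)) (Fin (n + m)) R :=
  Matrix.of fun i j =>
    if (i : ℕ) < n then
      (if (i : ℕ) ≤ (j : ℕ) ∧ (j : ℕ) ≤ (i : ℕ) + m then f.coeff (m + i - j) else 0)
    else
      (if (i : ℕ) - n ≤ (j : ℕ) ∧ (j : ℕ) ≤ ((i : ℕ) - n) + n then
        g.coeff (n + ((i : ℕ) - n) - j) else 0)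

/-- The resultant of `f` (degree `m`) and `g` (degree `n`), as the determinant of
their Sylvester matrix. -/
noncomputable def resultant {R : Type*} [CommRing R] (f g : Polynomial R) (m n : ℕ) : R :=
  (sylvesterMatrix f g m n).det

/-!
`A` is even, `A(x) = B(x²)` with `B` the quartic `x⁴ - 8wx³ + 6(2az+3b)x² - (4a³+27b²)`. After the
even- and odd-indexed rows and columns are separated, the Sylvester matrix of `B(x²)` and `B'(x²)`
splits into two copies of that of `B` and `B'`; since `A' = 2x · B'(x²)`, multiplicativity of the
resultant gives `Res(A, A') = 2⁸ · B(0) · Res(B, B')²`. As `B` has no linear term,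
`B' = 4x(x² - 6wx + 3(2az+3b))`, and one division of `B` by this quadratic factor leaves the
resultant of a linear and a quadratic polynomial.
-/

section

open Polynomial hiding resultant

variable {R : Type*} [CommRing R]

-- Mathlib lists coefficients in increasing degree, as columns and with those of `g` first, hence
-- the transpose and the reversal of the indices.
lemma sylvesterMatrix_eq_transpose_submatrix_sylvester (f g : R[X]) (m n : ℕ) :
    sylvesterMatrix f g m n =
      ((sylvester f g m n).submatrix ((finCongr (add_comm n m)).trans Fin.revPerm)
        ((finCongr (add_comm n m)).trans Fin.revPerm)).transpose := by
  ext i j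
  have hi := i.isLt
  have hj := j.isLt
  simp only [sylvesterMatrix, sylvester, Matrix.of_apply, Matrix.transpose_apply,
    Matrix.submatrix_apply, Equiv.trans_apply, finCongr_apply, Fin.revPerm_apply, Fin.addCases,
    Fin.val_rev, Fin.val_cast, Set.mem_Icc, eq_rec_constant, Fin.val_subNat, Fin.val_castLT]
  by_cases hin : (i : ℕ) < n
  · rw [if_pos hin, dif_neg (by lia)]
    refine ite_congr (propext (by lia)) (fun _ ↦ congrArg f.coeff (by lia)) fun _ ↦ rfl
  · rw [if_neg hin, dif_pos (by lia)]
    refine ite_congr (propext (by lia)) (fun _ ↦ congrArg g.coeff (by lia)) fun _ ↦ rfl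

lemma resultant_eq_polynomial_resultant (f g : R[X]) (m n : ℕ) :
    resultant f g m n = f.resultant g m n := by
  rw [resultant, sylvesterMatrix_eq_transpose_submatrix_sylvester, Matrix.det_transpose,
    Matrix.det_submatrix_equiv_self, Polynomial.resultant]

lemma resultant_mul_right_of_natDegree_le {f g₁ g₂ : R[X]} {m n₁ n₂ : ℕ} (hf : f.natDegree ≤ m)
    (hg₁ : g₁.natDegree ≤ n₁) (hg₂ : g₂.natDegree ≤ n₂) :
    f.resultant (g₁ * g₂) m (n₁ + n₂) = f.resultant g₁ m n₁ * f.resultant g₂ m n₂ := by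
  obtain ⟨k₁, rfl⟩ := Nat.exists_eq_add_of_le hg₁
  obtain ⟨k₂, rfl⟩ := Nat.exists_eq_add_of_le hg₂
  rw [add_add_add_comm, resultant_add_right_deg _ _ _ _ _ natDegree_mul_le,
    resultant_mul_right _ _ _ _ hf, resultant_add_right_deg _ _ _ _ _ le_rfl,
    resultant_add_right_deg _ _ _ _ _ le_rfl]
  ring

/-- `(i, r) ↦ i * p + r`, the splitting of the indices of the Sylvester matrix of
`expand R p f` and `expand R p g` by residue modulo `p`. -/
def sylvesterExpandEquiv (m n p : ℕ) : Fin (m + n) × Fin p ≃ Fin (m * p + n * p) :=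
  finProdFinEquiv.trans (finCongr (add_mul m n p))

lemma ite_mem_Icc_coeff_expand (f : R[X]) (n i j : ℕ) {p : ℕ} (r s : Fin p) :
    (if (r : ℕ) + p * i ∈ Set.Icc (s + p * j : ℕ) (s + p * j + n * p) then
        (expand R p f).coeff (r + p * i - (s + p * j)) else 0) =
      if r = s then (if i ∈ Set.Icc j (j + n) then f.coeff (i - j) else 0) else 0 := by
  have hp : 0 < p := r.pos
  by_cases hrs : r = s
  · subst hrs
    have mem_iff : (r : ℕ) + p * i ∈ Set.Icc (r + p * j : ℕ) (r + p * j + n * p) ↔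
        i ∈ Set.Icc j (j + n) := by
      rw [Set.mem_Icc, Set.mem_Icc, add_assoc, mul_comm n, ← mul_add, add_le_add_iff_left,
        add_le_add_iff_left, mul_le_mul_iff_right₀ hp, mul_le_mul_iff_right₀ hp]
    rw [if_pos rfl, Nat.add_sub_add_left, ← Nat.mul_sub, coeff_expand_mul' hp]
    simp only [mem_iff]
  · rw [if_neg hrs, coeff_expand hp]
    refine ite_eq_right_iff.2 fun hmem ↦ if_neg fun hdvd ↦ hrs (Fin.ext ?_)
    have hmod : s + p * j ≡ r + p * i [MOD p] := (Nat.modEq_iff_dvd' hmem.1).2 hdvd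
    simpa [Nat.ModEq, Nat.mod_eq_of_lt] using hmod.symm

lemma sylvester_expand_submatrix (f g : R[X]) (m n p : ℕ) :
    (sylvester (expand R p f) (expand R p g) (m * p) (n * p)).submatrix
        (sylvesterExpandEquiv m n p) (sylvesterExpandEquiv m n p) =
      Matrix.blockDiagonal fun _ : Fin p ↦ sylvester f g m n := by
  ext ⟨i, r⟩ ⟨j, s⟩
  rw [Matrix.submatrix_apply, Matrix.blockDiagonal_apply]
  induction j using Fin.addCases with
  | left j =>
    have col_eq : sylvesterExpandEquiv m n p (Fin.castAdd n j, s) =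
        Fin.castAdd (n * p) (finProdFinEquiv (j, s)) := Fin.ext rfl
    simp only [sylvester, Matrix.of_apply, col_eq, Fin.addCases_left]
    exact ite_mem_Icc_coeff_expand g n i j r s
  | right j =>
    have col_eq : sylvesterExpandEquiv m n p (Fin.natAdd m j, s) =
        Fin.natAdd (m * p) (finProdFinEquiv (j, s)) :=
      Fin.ext <| by
        simp only [sylvesterExpandEquiv, Equiv.trans_apply, finCongr_apply, Fin.val_cast,
          finProdFinEquiv_apply_val, Fin.val_natAdd]
        ring
    simp only [sylvester, Matrix.of_apply, col_eq, Fin.addCases_right]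
    exact ite_mem_Icc_coeff_expand f m i j r s

lemma resultant_expand (f g : R[X]) (m n p : ℕ) :
    (expand R p f).resultant (expand R p g) (m * p) (n * p) = f.resultant g m n ^ p := by
  rw [Polynomial.resultant, ← Matrix.det_submatrix_equiv_self (sylvesterExpandEquiv m n p),
    sylvester_expand_submatrix, Matrix.det_blockDiagonal, Finset.prod_const, Finset.card_fin,
    Polynomial.resultant]

lemma resultant_expand_derivative {f : R[X]} {n : ℕ} (hf : f.natDegree ≤ n + 1) {p : ℕ}
    (hp : 0 < p) :
    (expand R p f).resultant (derivative (expand R p f)) ((n + 1) * p) (n * p + (p - 1)) =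
      p ^ ((n + 1) * p) * f.coeff 0 ^ (p - 1) *
        f.resultant (derivative f) (n + 1) n ^ p := by
  have natDegree_expand_le : (expand R p f).natDegree ≤ (n + 1) * p := by
    rw [natDegree_expand]
    gcongr
  have natDegree_expand_derivative_le : (expand R p (derivative f)).natDegree ≤ n * p := by
    rw [natDegree_expand]
    gcongr
    exact (natDegree_derivative_le f).trans (by lia)
  have even_sign_exponent : Even ((n + 1) * p * (p - 1)) := by
    rw [mul_assoc]
    exact (Nat.even_mul_pred_self p).mul_left _
  have derivative_eq : derivative (expand R p f) =
      C (p : R) * (expand R p (derivative f) * X ^ (p - 1)) := by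
    rw [derivative_expand, C_eq_natCast]
    ring
  rw [derivative_eq, resultant_C_mul_right,
    resultant_mul_right_of_natDegree_le natDegree_expand_le natDegree_expand_derivative_le
      (natDegree_X_pow_le _),
    resultant_expand, resultant_X_pow_right _ _ _ natDegree_expand_le,
    even_sign_exponent.neg_one_pow, coeff_expand hp, if_pos (dvd_zero p), Nat.zero_div]
  ring

lemma resultant_linear_monic_quadratic (a b c d : R) :
    (C a * X + C b).resultant (X ^ 2 + C c * X + C d) 1 2 = b ^ 2 - c * a * b + d * a ^ 2 := by
  have sylvester_eq : sylvester (C a * X + C b) (X ^ 2 + C c * X + C d) 1 2 =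
      !![d, b, 0; c, a, b; 1, 0, a] := by
    ext i j
    fin_cases i <;> fin_cases j <;>
      simp [sylvester, Fin.addCases, coeff_X, coeff_C]
  rw [Polynomial.resultant, sylvester_eq, Matrix.det_fin_three]
  simp only [Matrix.of_apply, Matrix.cons_val]
  ring

/-- A monic quartic without linear term, its coefficients scaled so that its derivative is four
times a monic polynomial, which allows division over any ring. -/
noncomputable def scaledQuartic (p q s : R) : R[X] :=
  X ^ 4 + C (4 * p) * X ^ 3 + C (2 * q) * X ^ 2 + C s

lemma natDegree_scaledQuartic_le (p q s : R) : (scaledQuartic p q s).natDegree ≤ 4 := by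
  rw [scaledQuartic]
  compute_degree

lemma coeff_zero_scaledQuartic (p q s : R) : (scaledQuartic p q s).coeff 0 = s := by
  simp [scaledQuartic]

lemma derivative_scaledQuartic (p q s : R) :
    derivative (scaledQuartic p q s) = C 4 * (X * (X ^ 2 + C (3 * p) * X + C q)) := by
  simp only [scaledQuartic, derivative_mul, derivative_X_pow_succ, derivative_C,
    derivative_ofNat, map_mul, map_add, map_ofNat, map_one, Nat.cast_ofNat, Nat.cast_one, zero_mul,
    mul_zero, zero_add, add_zero, pow_one]
  ring

lemma scaledQuartic_eq_remainder_add_mul (p q s : R) :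
    scaledQuartic p q s =
      C (9 * p ^ 3 - 4 * p * q) * X + C (s - q ^ 2 + 3 * p ^ 2 * q) +
        (X ^ 2 + C (3 * p) * X + C q) * (X ^ 2 + C p * X + C (q - 3 * p ^ 2)) := by
  simp only [scaledQuartic, map_mul, map_sub, map_add, map_pow, map_ofNat]
  ring

lemma resultant_scaledQuartic_quadratic (p q s : R) :
    (scaledQuartic p q s).resultant (X ^ 2 + C (3 * p) * X + C q) 4 2 =
      s ^ 2 - (2 * q ^ 2 - 18 * p ^ 2 * q + 27 * p ^ 4) * s + q ^ 3 * (q - 2 * p ^ 2) := by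
  let H : R[X] := X ^ 2 + C (3 * p) * X + C q
  let ρ : R[X] := C (9 * p ^ 3 - 4 * p * q) * X + C (s - q ^ 2 + 3 * p ^ 2 * q)
  have natDegree_H_le : H.natDegree ≤ 2 := by
    unfold H
    compute_degree
  have coeff_H_two : H.coeff 2 = 1 := by
    unfold H
    compute_degree!
  have natDegree_quotient_le : (X ^ 2 + C p * X + C (q - 3 * p ^ 2)).natDegree ≤ 2 := by
    compute_degree
  calc (scaledQuartic p q s).resultant H 4 2
    _ = ρ.resultant H 4 2 := by
      rw [scaledQuartic_eq_remainder_add_mul]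
      exact resultant_add_mul_left ρ H _ 4 2 (by lia) natDegree_H_le
    _ = ρ.resultant H 1 2 := by
      rw [resultant_add_left_deg ρ H 1 2 3 natDegree_linear_le, coeff_H_two]
      ring
    _ = (s - q ^ 2 + 3 * p ^ 2 * q) ^ 2
          - 3 * p * (9 * p ^ 3 - 4 * p * q) * (s - q ^ 2 + 3 * p ^ 2 * q)
          + q * (9 * p ^ 3 - 4 * p * q) ^ 2 := resultant_linear_monic_quadratic ..
    _ = _ := by ring

lemma resultant_scaledQuartic_derivative (p q s : R) :
    (scaledQuartic p q s).resultant (derivative (scaledQuartic p q s)) 4 3 =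
      4 ^ 4 * s *
        (s ^ 2 - (2 * q ^ 2 - 18 * p ^ 2 * q + 27 * p ^ 4) * s + q ^ 3 * (q - 2 * p ^ 2)) := by
  have hquartic := natDegree_scaledQuartic_le p q s
  have resultant_X : (scaledQuartic p q s).resultant X 4 1 = s := by
    rw [← pow_one X, resultant_X_pow_right _ 4 1 hquartic, coeff_zero_scaledQuartic]
    ring
  rw [derivative_scaledQuartic, resultant_C_mul_right,
    resultant_mul_right_of_natDegree_le (n₁ := 1) (n₂ := 2) hquartic natDegree_X_le
      (by compute_degree),
    resultant_X, resultant_scaledQuartic_quadratic]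
  ring

/-- The quaternion origami polynomial `f_{E,Q8,P}` of the curve `E : y² = x³ + ax + b` and the
point `P = (z, w)`; that `P` lies on `E` is not imposed. -/
noncomputable def origamiPolynomial (a b z w : R) : R[X] :=
  X ^ 8 - C (8 * w) * X ^ 6 + C (6 * (2 * a * z + 3 * b)) * X ^ 4 - C (4 * a ^ 3 + 27 * b ^ 2)

lemma origamiPolynomial_eq_expand_scaledQuartic (a b z w : R) :
    origamiPolynomial a b z w =
      expand R 2
        (scaledQuartic (-2 * w) (3 * (2 * a * z + 3 * b)) (-(4 * a ^ 3 + 27 * b ^ 2))) := by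
  simp only [origamiPolynomial, scaledQuartic, expand_X, expand_C, map_mul, map_add, map_neg,
    map_pow, map_ofNat]
  ring

theorem discriminant_origami_polynomial_general (a b z w : R) :
    (-1) ^ 28 * resultant (origamiPolynomial a b z w) (derivative (origamiPolynomial a b z w)) 8 7 =
      -2 ^ 32 * (4 * a ^ 3 + 27 * b ^ 2) ^ 3 *
        (81 * z ^ 4 * a ^ 4 - 108 * z ^ 3 * w ^ 2 * a ^ 3
          + 486 * z ^ 3 * a ^ 3 * b - 486 * z ^ 2 * w ^ 2 * a ^ 2 * b
          + 18 * z ^ 2 * a ^ 5 + 1215 * z ^ 2 * a ^ 2 * b ^ 2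
          - 108 * z * w ^ 2 * a ^ 4 - 1458 * z * w ^ 2 * a * b ^ 2
          + 54 * z * a ^ 4 * b + 1458 * z * a * b ^ 3
          + 108 * w ^ 4 * a ^ 3 + 729 * w ^ 4 * b ^ 2
          - 162 * w ^ 2 * a ^ 3 * b - 1458 * w ^ 2 * b ^ 3
          + a ^ 6 + 54 * a ^ 3 * b ^ 2 + 729 * b ^ 4) ^ 2 := by
  have resultant_expand_two (p q s : R) :
      (expand R 2 (scaledQuartic p q s)).resultant
          (derivative (expand R 2 (scaledQuartic p q s))) 8 7 =
        2 ^ 8 * s * (scaledQuartic p q s).resultant (derivative (scaledQuartic p q s)) 4 3 ^ 2 := by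
    simpa only [Nat.reduceAdd, Nat.reduceMul, Nat.reduceSub, Nat.cast_ofNat, pow_one,
      coeff_zero_scaledQuartic] using
      resultant_expand_derivative (n := 3) (natDegree_scaledQuartic_le p q s) two_pos
  rw [resultant_eq_polynomial_resultant, origamiPolynomial_eq_expand_scaledQuartic,
    resultant_expand_two, resultant_scaledQuartic_derivative]
  ring

end

open MvPolynomial in
/-- With `a = X 0`, `b = X 1`, `z = X 2`, `w = X 3` in `ℚ[a,b,z,w]`, the discriminant
`(-1)^28 · Res_x(A, A')` of `A(x) = x⁸ - 8wx⁶ + 6(2az+3b)x⁴ - (4a³+27b²)` equals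
`-2³²(4a³+27b²)³ · (81z⁴a⁴ - 108z³w²a³ + ⋯ + 729b⁴)²`. -/
theorem discriminant_origami_polynomial :
    (-1 : MvPolynomial (Fin 4) ℚ) ^ 28 *
      resultant
        ((Polynomial.X ^ 8 - Polynomial.C (8 * X 3) * Polynomial.X ^ 6
            + Polynomial.C (6 * (2 * X 0 * X 2 + 3 * X 1)) * Polynomial.X ^ 4
            - Polynomial.C (4 * (X 0) ^ 3 + 27 * (X 1) ^ 2) :
              Polynomial (MvPolynomial (Fin 4) ℚ)))
        (Polynomial.derivative
          ((Polynomial.X ^ 8 - Polynomial.C (8 * X 3) * Polynomial.X ^ 6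
              + Polynomial.C (6 * (2 * X 0 * X 2 + 3 * X 1)) * Polynomial.X ^ 4
              - Polynomial.C (4 * (X 0) ^ 3 + 27 * (X 1) ^ 2) :
                Polynomial (MvPolynomial (Fin 4) ℚ))))
        8 7
    = -2 ^ 32 * (4 * (X 0) ^ 3 + 27 * (X 1) ^ 2) ^ 3 *
        (81 * (X 2) ^ 4 * (X 0) ^ 4 - 108 * (X 2) ^ 3 * (X 3) ^ 2 * (X 0) ^ 3
          + 486 * (X 2) ^ 3 * (X 0) ^ 3 * X 1 - 486 * (X 2) ^ 2 * (X 3) ^ 2 * (X 0) ^ 2 * X 1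
          + 18 * (X 2) ^ 2 * (X 0) ^ 5 + 1215 * (X 2) ^ 2 * (X 0) ^ 2 * (X 1) ^ 2
          - 108 * X 2 * (X 3) ^ 2 * (X 0) ^ 4 - 1458 * X 2 * (X 3) ^ 2 * X 0 * (X 1) ^ 2
          + 54 * X 2 * (X 0) ^ 4 * X 1 + 1458 * X 2 * X 0 * (X 1) ^ 3
          + 108 * (X 3) ^ 4 * (X 0) ^ 3 + 729 * (X 3) ^ 4 * (X 1) ^ 2
          - 162 * (X 3) ^ 2 * (X 0) ^ 3 * X 1 - 1458 * (X 3) ^ 2 * (X 1) ^ 3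
          + (X 0) ^ 6 + 54 * (X 0) ^ 3 * (X 1) ^ 2 + 729 * (X 1) ^ 4) ^ 2 :=
  discriminant_origami_polynomial_general (X 0) (X 1) (X 2) (X 3)
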